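/- Let D be a bounded domain in ℝ³ such that for every continuous function f on ∂D there exists a function continuous on the closure of D, harmonic in D, and equal to f on ∂D (a Dirichlet domain), and let u : closure(D) → ℝ be continuous on the closure of D and C² in D. Fix μ > 0. If for every x ∈ D there exists r(x) > 0 such that the closure of B_{r(x)}(x) is contained in D and M(x, r(x), u) = (sinh(μ r(x))/(μ r(x))) · u(x), then u satisfies ∇²u − μ²u = 0 in D. -/

import Mathlib

open MeasureTheory Metric

/-- The spherical mean `M(x, r, u) = (1/ω_m) ∫_{S_1(0)} u(x + r y) dS_y`,
realized as the average of `y ↦ u (x + r • y)` over the unit sphere with respect to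
the `(m-1)`-dimensional Hausdorff (surface-area) measure. -/
noncomputable def sphereMean (m : ℕ) (u : EuclideanSpace ℝ (Fin m) → ℝ)
    (x : EuclideanSpace ℝ (Fin m)) (r : ℝ) : ℝ :=
  ⨍ y in sphere (0 : EuclideanSpace ℝ (Fin m)) 1, u (x + r • y) ∂μH[(m : ℝ) - 1]

/-- The iterated spherical mean
`I(x, r', r, u) = (1/ω_m²) ∫_{S_1(0)} ∫_{S_1(0)} u(x + r' y + r z) dS_z dS_y`. -/
noncomputable def iterSphereMean (m : ℕ) (u : EuclideanSpace ℝ (Fin m) → ℝ)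
    (x : EuclideanSpace ℝ (Fin m)) (r' r : ℝ) : ℝ :=
  ⨍ y in sphere (0 : EuclideanSpace ℝ (Fin m)) 1,
    ⨍ z in sphere (0 : EuclideanSpace ℝ (Fin m)) 1,
      u (x + r' • y + r • z) ∂μH[(m : ℝ) - 1] ∂μH[(m : ℝ) - 1]

/-- The Laplacian `∇²u (x) = ∑ i ∂²u/∂x_i² (x)`. -/
noncomputable def laplacian (m : ℕ) (u : EuclideanSpace ℝ (Fin m) → ℝ)
    (x : EuclideanSpace ℝ (Fin m)) : ℝ :=
  ∑ i : Fin m, fderiv ℝ (fun y => fderiv ℝ u y (EuclideanSpace.single i 1)) x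
    (EuclideanSpace.single i 1)

/-!
Solve `Δv = μ²v` in `D` with the boundary values of `u`. The mean of `v` over any sphere of radius
`r` in `D` is `sinh (μ r) / (μ r) * v x`, because `r * sphereMean 3 v x r` satisfies a Volterra
equation. As `sinh t / t > 1`, the difference `u - v` cannot have a positive interior maximum or a
negative interior minimum, so `u = v`.

The solution `v` comes from the method of continuity applied to `Δ - l` for `0 ≤ l ≤ μ²`. To avoid
elliptic regularity, `Δ` is taken in a mean-value sense, which defines a closed operator on
`C(closure D)`. For `l = 0` its range is dense because the Dirichlet condition solves
`Δv = exp ⟪ξ, ·⟫`, and a quadratic barrier gives the a priori bound for all `l`.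
-/

section MethodOfContinuity

variable {𝕜 X Y : Type*} [NontriviallyNormedField 𝕜] [NormedAddCommGroup X] [NormedSpace 𝕜 X]
  [CompleteSpace X] [NormedAddCommGroup Y] [NormedSpace 𝕜 Y]

theorem surjective_of_antilipschitzWith_of_norm_sub_lt {A B : X →L[𝕜] Y} {K : NNReal}
    (hA : AntilipschitzWith K A) (hB : AntilipschitzWith K B) (hAB : K * ‖A - B‖ < 1)
    (hsurj : Function.Surjective A) : Function.Surjective B := by
  by_contra hnot
  obtain ⟨y₀, hy₀⟩ : ∃ y, y ∉ B.range := by simpa [Function.Surjective] using hnot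
  obtain ⟨r, hr, hr1⟩ := exists_between hAB
  obtain ⟨y, hy, hdist⟩ := riesz_lemma (hB.isClosed_range B.uniformContinuous) ⟨y₀, hy₀⟩ hr1
  obtain ⟨x, rfl⟩ := hsurj y
  have hAx : 0 < ‖A x‖ := norm_pos_iff.2 fun h => hy (h ▸ zero_mem _)
  have hlt : ‖A x - B x‖ < r * ‖A x‖ :=
    calc ‖A x - B x‖ ≤ ‖A - B‖ * ‖x‖ := (A - B).le_opNorm x
      _ ≤ ‖A - B‖ * (K * ‖A x‖) := by gcongr; exact A.bound_of_antilipschitz hA x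
      _ = K * ‖A - B‖ * ‖A x‖ := by ring
      _ < r * ‖A x‖ := by gcongr
  exact hlt.not_ge (hdist (B x) ⟨x, rfl⟩)

theorem surjective_of_continuous_of_antilipschitzWith {T : Type*} [TopologicalSpace T]
    [PreconnectedSpace T] {L : T → X →L[𝕜] Y} (hL : Continuous L) {K : NNReal}
    (hK : ∀ t, AntilipschitzWith K (L t)) {t₀ : T} (h₀ : Function.Surjective (L t₀)) (t : T) :
    Function.Surjective (L t) := by
  have hloc : IsLocallyConstant fun t => Function.Surjective (L t) := by
    refine (IsLocallyConstant.iff_eventually_eq _).2 fun t => ?_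
    have hlim : Filter.Tendsto (fun s => K * ‖L t - L s‖) (nhds t) (nhds 0) := by
      have hcont : Continuous fun s => K * ‖L t - L s‖ := by fun_prop
      simpa using hcont.tendsto t
    filter_upwards [hlim.eventually_lt_const one_pos] with s hs
    refine propext ⟨surjective_of_antilipschitzWith_of_norm_sub_lt (hK s) (hK t) ?_,
      surjective_of_antilipschitzWith_of_norm_sub_lt (hK t) (hK s) hs⟩
    rwa [norm_sub_rev]
  exact (hloc.apply_eq_of_preconnectedSpace t t₀).mpr h₀

theorem surjective_sub_smul_of_isPreconnected {s : Set 𝕜} (hs : IsPreconnected s) {A B : X →L[𝕜] Y}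
    {K : NNReal} (hK : ∀ t ∈ s, AntilipschitzWith K (A - t • B)) {a b : 𝕜} (ha : a ∈ s)
    (hb : b ∈ s) (hsurj : Function.Surjective (A - a • B)) :
    Function.Surjective (A - b • B) := by
  have : PreconnectedSpace s := Subtype.preconnectedSpace hs
  exact surjective_of_continuous_of_antilipschitzWith (L := fun t : s => A - (t : 𝕜) • B)
    (by fun_prop) (fun t => hK t t.2) (t₀ := ⟨a, ha⟩) hsurj ⟨b, hb⟩

end MethodOfContinuity

section ClosedOperatorGraph

variable {V : Type*} [NormedAddCommGroup V] [NormedSpace ℝ V]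

/-- The operator `T - l` on the graph `G` of an unbounded operator `T` in `V`. -/
noncomputable def graphSubSMul (G : Submodule ℝ (V × V)) (l : ℝ) : G →L[ℝ] V :=
  (ContinuousLinearMap.snd ℝ V V).comp G.subtypeL -
    l • (ContinuousLinearMap.fst ℝ V V).comp G.subtypeL

variable {G : Submodule ℝ (V × V)} {b C : ℝ}

theorem exists_forall_antilipschitzWith_graphSubSMul
    (hC : ∀ l ∈ Set.Icc 0 b, ∀ p ∈ G, ‖p.1‖ ≤ C * ‖p.2 - l • p.1‖) :
    ∃ K, ∀ l ∈ Set.Icc 0 b, AntilipschitzWith K (graphSubSMul G l) := by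
  refine ⟨(1 + (1 + |b|) * |C|).toNNReal, fun l hl => ?_⟩
  refine AddMonoidHomClass.antilipschitz_of_bound _ fun p => ?_
  rw [Real.coe_toNNReal _ (by positivity)]
  have hfst : ‖p.1.1‖ ≤ |C| * ‖graphSubSMul G l p‖ :=
    (hC l hl p p.2).trans (mul_le_mul_of_nonneg_right (le_abs_self C) (norm_nonneg _))
  have hsnd : ‖p.1.2‖ ≤ ‖graphSubSMul G l p‖ + l * ‖p.1.1‖ := by
    rw [← Real.norm_of_nonneg hl.1, ← norm_smul, Real.norm_of_nonneg hl.1]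
    exact norm_le_norm_sub_add p.1.2 (l • p.1.1)
  calc ‖p‖ ≤ ‖p.1.1‖ + ‖p.1.2‖ := max_le_add_of_nonneg (norm_nonneg _) (norm_nonneg _)
    _ ≤ ‖graphSubSMul G l p‖ + (1 + l) * ‖p.1.1‖ := by linarith
    _ ≤ ‖graphSubSMul G l p‖ + (1 + |b|) * (|C| * ‖graphSubSMul G l p‖) := by
      gcongr
      exact hl.2.trans (le_abs_self b)
    _ = (1 + (1 + |b|) * |C|) * ‖graphSubSMul G l p‖ := by ring

theorem exists_mem_sub_smul_eq [CompleteSpace V] (hG : IsClosed (G : Set (V × V)))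
    (hdense : Dense (Prod.snd '' (G : Set (V × V))))
    (hC : ∀ l ∈ Set.Icc 0 b, ∀ p ∈ G, ‖p.1‖ ≤ C * ‖p.2 - l • p.1‖) {l : ℝ}
    (hl : l ∈ Set.Icc 0 b) (y : V) : ∃ p ∈ G, p.2 - l • p.1 = y := by
  obtain ⟨K, hK⟩ := exists_forall_antilipschitzWith_graphSubSMul hC
  have h0 : (0 : ℝ) ∈ Set.Icc 0 b := ⟨le_rfl, hl.1.trans hl.2⟩
  have : CompleteSpace G := hG.completeSpace_coe
  have hclosed : IsClosed (Set.range (graphSubSMul G 0)) :=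
    (hK 0 h0).isClosed_range (graphSubSMul G 0).uniformContinuous
  have hrange : Prod.snd '' (G : Set (V × V)) ⊆ Set.range (graphSubSMul G 0) := by
    rintro _ ⟨p, hp, rfl⟩
    exact ⟨⟨p, hp⟩, by simp [graphSubSMul]⟩
  have hsurj : Function.Surjective (graphSubSMul G 0) := Set.range_eq_univ.1
    (hclosed.closure_eq.symm.trans (hdense.mono hrange).closure_eq)
  obtain ⟨p, hp⟩ := surjective_sub_smul_of_isPreconnected isPreconnected_Icc hK h0 hl hsurj y
  exact ⟨p, p.2, hp⟩

end ClosedOperatorGraph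

section UnitSphereMeasure

open Module

variable {E : Type*} [NormedAddCommGroup E] [InnerProductSpace ℝ E]

theorem sphere_inter_halfSpace_subset_image_stereoInvFunAux {v : E} (hv : ‖v‖ = 1) :
    sphere (0 : E) 1 ∩ {x | inner ℝ v x ≤ 0} ⊆
      (fun w : (ℝ ∙ v)ᗮ => stereoInvFunAux v w) '' closedBall 0 2 := by
  rintro x ⟨hx, hvx : inner ℝ v x ≤ 0⟩
  have hxv : x ≠ v := by
    rintro rfl
    rw [real_inner_self_eq_norm_sq, hv] at hvx
    norm_num at hvx
  refine ⟨stereoToFun v x, ?_, ?_⟩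
  · have hproj : ‖(ℝ ∙ v)ᗮ.orthogonalProjectionOnto x‖ ≤ 1 :=
      ((ℝ ∙ v)ᗮ.norm_orthogonalProjectionOnto_apply_le x).trans (mem_sphere_zero_iff_norm.1 hx).le
    have hfactor : 2 / (1 - inner ℝ v x) ≤ 2 := div_le_self zero_le_two (by linarith)
    have hfactor₀ : 0 ≤ 2 / (1 - inner ℝ v x) := div_nonneg zero_le_two (by linarith)
    rw [mem_closedBall_zero_iff, stereoToFun_apply, norm_smul, innerSL_apply_apply,
      Real.norm_of_nonneg hfactor₀]
    nlinarith [norm_nonneg ((ℝ ∙ v)ᗮ.orthogonalProjectionOnto x)]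
  · exact congrArg Subtype.val (stereo_left_inv hv (x := ⟨x, hx⟩) hxv)

theorem closedBall_subset_orthogonalProjectionOnto_image_sphere {v : E} (hv : ‖v‖ = 1) :
    closedBall 0 1 ⊆ (ℝ ∙ v)ᗮ.orthogonalProjectionOnto '' sphere (0 : E) 1 := by
  intro w hw
  have hw1 : ‖w‖ ≤ 1 := mem_closedBall_zero_iff.1 hw
  have horth : inner ℝ (w : E) (√(1 - ‖w‖ ^ 2) • v) = 0 := by
    rw [inner_smul_right, Submodule.mem_orthogonal_singleton_iff_inner_left.1 w.2, mul_zero]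
  refine ⟨w + √(1 - ‖w‖ ^ 2) • v, ?_, ?_⟩
  · have hsq : ‖(w : E) + √(1 - ‖w‖ ^ 2) • v‖ ^ 2 = 1 := by
      rw [norm_add_sq_real, horth, norm_smul, hv, mul_one, Real.norm_eq_abs, sq_abs,
        Real.sq_sqrt (by nlinarith [norm_nonneg w]), Submodule.coe_norm]
      ring
    rw [mem_sphere_zero_iff_norm]
    nlinarith [norm_nonneg ((w : E) + √(1 - ‖w‖ ^ 2) • v)]
  · rw [map_add, map_smul, Submodule.orthogonalProjectionOnto_mem_subspace_eq_self,
      Submodule.orthogonalProjectionOnto_orthogonal_apply_eq_zero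
        (Submodule.mem_span_singleton_self v), smul_zero, add_zero]

variable [FiniteDimensional ℝ E] [MeasurableSpace E] [BorelSpace E] {n : ℕ}

theorem hausdorffMeasure_sphere_inter_halfSpace_lt_top (hn : finrank ℝ E = n + 1) {v : E}
    (hv : ‖v‖ = 1) : μH[n] (sphere (0 : E) 1 ∩ {x | inner ℝ v x ≤ 0}) < ⊤ := by
  have : Fact (finrank ℝ E = n + 1) := ⟨hn⟩
  have hrank : finrank ℝ (ℝ ∙ v)ᗮ = n :=
    Submodule.finrank_orthogonal_span_singleton (ne_zero_of_norm_ne_zero (hv ▸ one_ne_zero))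
  have hsmooth : ContDiff ℝ 1 fun w : (ℝ ∙ v)ᗮ => stereoInvFunAux v w :=
    contDiff_stereoInvFunAux.comp (ℝ ∙ v)ᗮ.subtypeL.contDiff
  obtain ⟨K, hK⟩ := hsmooth.locallyLipschitz.locallyLipschitzOn
    |>.exists_lipschitzOnWith_of_compact (isCompact_closedBall (0 : (ℝ ∙ v)ᗮ) 2)
  have hball : μH[n] (closedBall (0 : (ℝ ∙ v)ᗮ) 2) < ⊤ :=
    hrank ▸ (isCompact_closedBall (0 : (ℝ ∙ v)ᗮ) 2).measure_lt_top
  calc μH[n] (sphere (0 : E) 1 ∩ {x | inner ℝ v x ≤ 0})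
      ≤ μH[n] ((fun w : (ℝ ∙ v)ᗮ => stereoInvFunAux v w) '' closedBall 0 2) :=
        measure_mono (sphere_inter_halfSpace_subset_image_stereoInvFunAux hv)
    _ ≤ (K : ENNReal) ^ (n : ℝ) * μH[n] (closedBall (0 : (ℝ ∙ v)ᗮ) 2) :=
        hK.hausdorffMeasure_image_le n.cast_nonneg
    _ < ⊤ := ENNReal.mul_lt_top (ENNReal.rpow_lt_top_of_nonneg n.cast_nonneg
        ENNReal.coe_ne_top) hball

theorem hausdorffMeasure_sphere_lt_top (hn : finrank ℝ E = n + 1) :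
    μH[n] (sphere (0 : E) 1) < ⊤ := by
  have : Nontrivial E := nontrivial_of_finrank_pos (R := ℝ) (by lia)
  obtain ⟨v, hv⟩ := exists_norm_eq E zero_le_one
  have hcover : sphere (0 : E) 1 ⊆ (sphere 0 1 ∩ {x | inner ℝ v x ≤ 0}) ∪
      (sphere 0 1 ∩ {x | inner ℝ (-v) x ≤ 0}) := fun x hx => by
    rcases le_total (inner ℝ v x) 0 with h | h
    · exact Or.inl ⟨hx, h⟩
    · exact Or.inr ⟨hx, by simpa using h⟩
  exact (measure_mono hcover).trans_lt <| measure_union_lt_top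
    (hausdorffMeasure_sphere_inter_halfSpace_lt_top hn hv)
    (hausdorffMeasure_sphere_inter_halfSpace_lt_top hn ((norm_neg v).trans hv))

theorem hausdorffMeasure_sphere_pos (hn : finrank ℝ E = n + 1) :
    0 < μH[n] (sphere (0 : E) 1) := by
  have : Fact (finrank ℝ E = n + 1) := ⟨hn⟩
  have : Nontrivial E := nontrivial_of_finrank_pos (R := ℝ) (by lia)
  obtain ⟨v, hv⟩ := exists_norm_eq E zero_le_one
  have hrank : finrank ℝ (ℝ ∙ v)ᗮ = n :=
    Submodule.finrank_orthogonal_span_singleton (ne_zero_of_norm_ne_zero (hv ▸ one_ne_zero))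
  calc 0 < μH[n] (closedBall (0 : (ℝ ∙ v)ᗮ) 1) := hrank ▸ measure_closedBall_pos _ _ one_pos
    _ ≤ μH[n] ((ℝ ∙ v)ᗮ.orthogonalProjectionOnto '' sphere (0 : E) 1) :=
        measure_mono (closedBall_subset_orthogonalProjectionOnto_image_sphere hv)
    _ ≤ μH[n] (sphere (0 : E) 1) := by
        simpa using (ℝ ∙ v)ᗮ.lipschitzWith_orthogonalProjectionOnto.hausdorffMeasure_image_le
          n.cast_nonneg (sphere (0 : E) 1)

end UnitSphereMeasure

section IntegralOverCompact

variable {X F : Type*} [TopologicalSpace X] [MeasurableSpace X]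
  [OpensMeasurableSpace X] [NormedAddCommGroup F] {σ : Measure X} [IsFiniteMeasure σ]
  {K : Set X}

theorem continuous_integral_of_ae_mem_isCompact [NormedSpace ℝ F]
    [SecondCountableTopology X] (hK : IsCompact K) (hσ : ∀ᵐ y ∂σ, y ∈ K) {f : ℝ → X → F}
    (hf : Continuous (Function.uncurry f)) :
    Continuous fun t => ∫ y, f t y ∂σ := by
  rw [← Measure.restrict_eq_self_of_ae_mem hσ]
  exact continuous_parametric_integral_of_continuous hf hK

variable [T2Space X]

theorem integrable_of_continuousOn_of_ae_mem_isCompact (hK : IsCompact K)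
    (hσ : ∀ᵐ y ∂σ, y ∈ K) {f : X → F} (hf : ContinuousOn f K) : Integrable f σ := by
  rw [← Measure.restrict_eq_self_of_ae_mem hσ]
  exact hf.integrableOn_compact hK

variable [NormedSpace ℝ F]

theorem hasDerivAt_integral_of_ae_mem_isCompact (hK : IsCompact K) (hσ : ∀ᵐ y ∂σ, y ∈ K)
    {f f' : ℝ → X → F} (hf : ∀ t, Continuous (f t)) (hf' : Continuous (Function.uncurry f'))
    (hderiv : ∀ t y, HasDerivAt (f · y) (f' t y) t) (t₀ : ℝ) :
    HasDerivAt (fun t => ∫ y, f t y ∂σ) (∫ y, f' t₀ y ∂σ) t₀ := by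
  have hint {g : X → F} (hg : Continuous g) : Integrable g σ :=
    integrable_of_continuousOn_of_ae_mem_isCompact hK hσ hg.continuousOn
  obtain ⟨C, hC⟩ := ((isCompact_closedBall t₀ 1).prod hK).exists_bound_of_continuousOn
    hf'.continuousOn
  refine (hasDerivAt_integral_of_dominated_loc_of_deriv_le (bound := fun _ => C)
    (closedBall_mem_nhds t₀ one_pos) (.of_forall fun t => (hint (hf t)).aestronglyMeasurable)
    (hint (hf t₀)) (hint (hf'.comp (.prodMk_right t₀))).aestronglyMeasurable ?_
    (integrable_const C) (.of_forall fun y t _ => hderiv t y)).2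
  filter_upwards [hσ] with y hy t ht using hC (t, y) ⟨ht, hy⟩

end IntegralOverCompact

section RotationInvariance

variable {E : Type*} [NormedAddCommGroup E] [InnerProductSpace ℝ E]

theorem sum_fderiv_inner_smul_rankOne_sub_rankOne {ι : Type*} [Fintype ι]
    (b : OrthonormalBasis ι ℝ E) {G : E → E →L[ℝ] ℝ} {y : E} (hG : DifferentiableAt ℝ G y) :
    ∑ i, ∑ j, fderiv ℝ (fun z => inner ℝ (b i) z * G z (b j)) y
      ((InnerProductSpace.rankOne ℝ (b j) (b i) - InnerProductSpace.rankOne ℝ (b i) (b j)) y) =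
    ‖y‖ ^ 2 * ∑ i, fderiv ℝ G y (b i) (b i) -
      (fderiv ℝ G y y y + (Fintype.card ι - 1) * G y y) := by
  classical
  have hderiv (i j : ι) (w : E) : fderiv ℝ (fun z => inner ℝ (b i) z * G z (b j)) y w =
      inner ℝ (b i) w * G y (b j) + inner ℝ (b i) y * fderiv ℝ G y w (b j) := by
    have hinner : HasFDerivAt (fun z => inner ℝ (b i) z) (innerSL ℝ (b i)) y :=
      (innerSL ℝ (b i)).hasFDerivAt
    have hmul := hinner.fun_mul (hG.hasFDerivAt.clm_apply (hasFDerivAt_const (b j) y))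
    simpa [add_comm, mul_comm] using congrArg (· w) hmul.fderiv
  have hnorm : ‖y‖ ^ 2 = ∑ i, inner ℝ (b i) y ^ 2 := by
    simpa using (b.sum_sq_norm_inner_right y).symm
  have happly (l : E →L[ℝ] ℝ) : l y = ∑ j, inner ℝ (b j) y * l (b j) := by
    conv_lhs => rw [← b.sum_repr' y]
    simp
  have happly₂ : fderiv ℝ G y y y =
      ∑ i, inner ℝ (b i) y * ∑ j, inner ℝ (b j) y * fderiv ℝ G y (b i) (b j) := by
    rw [← ContinuousLinearMap.flip_apply, happly]
    simp only [ContinuousLinearMap.flip_apply, ← happly]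
  have hterm (i j : ι) : fderiv ℝ (fun z => inner ℝ (b i) z * G z (b j)) y
      ((InnerProductSpace.rankOne ℝ (b j) (b i) - InnerProductSpace.rankOne ℝ (b i) (b j)) y) =
      ((if i = j then inner ℝ (b j) y * G y (b j) else 0) - inner ℝ (b j) y * G y (b j)) +
      (inner ℝ (b i) y ^ 2 * fderiv ℝ G y (b j) (b j) -
        inner ℝ (b i) y * (inner ℝ (b j) y * fderiv ℝ G y (b i) (b j))) := by
    simp only [hderiv, sub_apply, InnerProductSpace.rankOne_apply,
      inner_sub_right, inner_smul_right, b.inner_eq_ite, map_sub, map_smul,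
      smul_apply, smul_eq_mul, if_true]
    split_ifs with hij
    · subst hij; ring
    · ring
  simp only [hterm, Finset.sum_add_distrib, Finset.sum_sub_distrib, Finset.sum_ite_eq,
    Finset.mem_univ, if_true, Finset.sum_const, Finset.card_univ, nsmul_eq_mul,
    ← Finset.mul_sum, ← Finset.sum_mul, ← happly (G y), ← hnorm, happly₂]
  ring

variable [FiniteDimensional ℝ E]

theorem skewAdjoint_rankOne_sub_rankOne (v w : E) :
    InnerProductSpace.rankOne ℝ v w - InnerProductSpace.rankOne ℝ w v ∈
      skewAdjoint (E →L[ℝ] E) := by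
  rw [skewAdjoint.mem_iff, star_sub, ContinuousLinearMap.star_eq_adjoint,
    ContinuousLinearMap.star_eq_adjoint, InnerProductSpace.adjoint_rankOne,
    InnerProductSpace.adjoint_rankOne, neg_sub]

theorem exists_linearIsometryEquiv_eq_exp_of_mem_skewAdjoint {A : E →L[ℝ] E}
    (hA : A ∈ skewAdjoint (E →L[ℝ] E)) : ∃ e : E ≃ₗᵢ[ℝ] E, ⇑e = NormedSpace.exp A :=
  letI : NormedAlgebra ℚ (E →L[ℝ] E) := NormedAlgebra.restrictScalars ℚ ℝ _
  ⟨Unitary.linearIsometryEquiv ⟨_, NormedSpace.exp_mem_unitary_of_mem_skewAdjoint hA⟩, rfl⟩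

variable [MeasurableSpace E] [BorelSpace E] {F : Type*} [NormedAddCommGroup F] [NormedSpace ℝ F]
  {σ : Measure E} [IsFiniteMeasure σ] {K : Set E}

theorem integral_fderiv_apply_eq_zero_of_mem_skewAdjoint (hK : IsCompact K)
    (hσ : ∀ᵐ y ∂σ, y ∈ K) (hrot : ∀ e : E ≃ₗᵢ[ℝ] E, MeasurePreserving e σ σ)
    {A : E →L[ℝ] E} (hA : A ∈ skewAdjoint (E →L[ℝ] E)) {f : E → F} (hf : ContDiff ℝ 1 f) :
    ∫ y, fderiv ℝ f y (A y) ∂σ = 0 := by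
  have hexp (t : ℝ) : HasDerivAt (fun s : ℝ => NormedSpace.exp (s • A))
      (A * NormedSpace.exp (t • A)) t := hasDerivAt_exp_smul_const' A t
  have hexp_cont : Continuous fun s : ℝ => NormedSpace.exp (s • A) :=
    continuous_iff_continuousAt.2 fun t => (hexp t).continuousAt
  have hconst (t : ℝ) : ∫ y, f (NormedSpace.exp (t • A) y) ∂σ = ∫ y, f y ∂σ := by
    obtain ⟨e, he⟩ := exists_linearIsometryEquiv_eq_exp_of_mem_skewAdjoint
      (skewAdjoint.smul_mem t hA)
    rw [← he]
    exact (hrot e).integral_comp e.toHomeomorph.measurableEmbedding f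
  have hderiv := hasDerivAt_integral_of_ae_mem_isCompact hK hσ
    (f := fun t y => f (NormedSpace.exp (t • A) y))
    (f' := fun t y => fderiv ℝ f (NormedSpace.exp (t • A) y) (A (NormedSpace.exp (t • A) y)))
    (fun t => hf.continuous.comp (ContinuousLinearMap.continuous _))
    (by
      have hfderiv := hf.continuous_fderiv one_ne_zero
      have hpoint : Continuous fun p : ℝ × E => NormedSpace.exp (p.1 • A) p.2 :=
        (hexp_cont.comp continuous_fst).clm_apply continuous_snd
      exact (hfderiv.comp hpoint).clm_apply (A.continuous.comp hpoint))
    (fun t y => (hf.differentiable one_ne_zero _).hasFDerivAt.comp_hasDerivAt t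
      ((hexp t).clm_apply (hasDerivAt_const t y) |>.congr_deriv (by simp))) 0
  simp_rw [hconst] at hderiv
  simpa [NormedSpace.exp_zero] using hderiv.unique (hasDerivAt_const 0 _)

theorem integral_sum_fderiv_apply_orthonormalBasis {ι : Type*} [Fintype ι]
    (b : OrthonormalBasis ι ℝ E) (hσ : ∀ᵐ y ∂σ, y ∈ sphere 0 1)
    (hrot : ∀ e : E ≃ₗᵢ[ℝ] E, MeasurePreserving e σ σ) {G : E → E →L[ℝ] ℝ}
    (hG : ContDiff ℝ 1 G) :
    ∫ y, ∑ i, fderiv ℝ G y (b i) (b i) ∂σ =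
      ∫ y, (fderiv ℝ G y y y + (Fintype.card ι - 1) * G y y) ∂σ := by
  have hint {f : E → ℝ} (hf : Continuous f) : Integrable f σ :=
    integrable_of_continuousOn_of_ae_mem_isCompact (isCompact_sphere 0 1) hσ hf.continuousOn
  have hfield (i j : ι) : ContDiff ℝ 1 fun z => inner ℝ (b i) z * G z (b j) :=
    (innerSL ℝ (b i)).contDiff.mul (hG.clm_apply contDiff_const)
  have hfield_cont (i j : ι) := (hfield i j).continuous_fderiv one_ne_zero
  rw [← sub_eq_zero, ← integral_sub (hint (by fun_prop)) (hint (by fun_prop))]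
  calc ∫ y, (∑ i, fderiv ℝ G y (b i) (b i) -
        (fderiv ℝ G y y y + (Fintype.card ι - 1) * G y y)) ∂σ
      = ∫ y, ∑ i, ∑ j, fderiv ℝ (fun z => inner ℝ (b i) z * G z (b j)) y
          ((InnerProductSpace.rankOne ℝ (b j) (b i) -
            InnerProductSpace.rankOne ℝ (b i) (b j)) y) ∂σ := by
        refine integral_congr_ae (hσ.mono fun y hy => ?_)
        simp only [sum_fderiv_inner_smul_rankOne_sub_rankOne b (hG.differentiable one_ne_zero y),
          mem_sphere_zero_iff_norm.1 hy, one_pow, one_mul]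
    _ = ∑ i, ∑ j, ∫ y, fderiv ℝ (fun z => inner ℝ (b i) z * G z (b j)) y
          ((InnerProductSpace.rankOne ℝ (b j) (b i) -
            InnerProductSpace.rankOne ℝ (b i) (b j)) y) ∂σ := by
        rw [integral_finsetSum _ fun i _ => hint (by fun_prop)]
        exact Finset.sum_congr rfl fun i _ => integral_finsetSum _ fun j _ => hint (by fun_prop)
    _ = 0 := Finset.sum_eq_zero fun i _ => Finset.sum_eq_zero fun j _ =>
        integral_fderiv_apply_eq_zero_of_mem_skewAdjoint (isCompact_sphere 0 1) hσ hrot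
          (skewAdjoint_rankOne_sub_rankOne _ _) (hfield i j)

end RotationInvariance

section SphericalMeans

variable {m : ℕ}

/-- The surface measure of the unit sphere of `ℝᵐ`, normalized to total mass one; `sphereMean` is
integration against it. -/
noncomputable def unitSphereMeasure (m : ℕ) : Measure (EuclideanSpace ℝ (Fin m)) :=
  ProbabilityTheory.cond μH[(m : ℝ) - 1] (sphere 0 1)

instance [NeZero m] : IsProbabilityMeasure (unitSphereMeasure m) := by
  have hdim : Module.finrank ℝ (EuclideanSpace ℝ (Fin m)) = (m - 1) + 1 := by
    rw [finrank_euclideanSpace_fin, Nat.sub_add_cancel NeZero.one_le]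
  have hcast : (m : ℝ) - 1 = (m - 1 : ℕ) := by rw [Nat.cast_pred (NeZero.pos m)]
  unfold unitSphereMeasure
  rw [hcast]
  exact ProbabilityTheory.cond_isProbabilityMeasure_of_finite
    (hausdorffMeasure_sphere_pos hdim).ne' (hausdorffMeasure_sphere_lt_top hdim).ne

theorem ae_mem_sphere_unitSphereMeasure : ∀ᵐ y ∂unitSphereMeasure m, y ∈ sphere 0 1 :=
  ProbabilityTheory.ae_cond_mem isClosed_sphere.measurableSet

theorem ae_mem_closedBall_unitSphereMeasure : ∀ᵐ y ∂unitSphereMeasure m, y ∈ closedBall 0 1 :=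
  ae_mem_sphere_unitSphereMeasure.mono fun _ hy => sphere_subset_closedBall hy

theorem measurePreserving_unitSphereMeasure
    (e : EuclideanSpace ℝ (Fin m) ≃ₗᵢ[ℝ] EuclideanSpace ℝ (Fin m)) :
    MeasurePreserving e (unitSphereMeasure m) (unitSphereMeasure m) := by
  have hrestrict := (e.toIsometryEquiv.measurePreserving_hausdorffMeasure
    ((m : ℝ) - 1)).restrict_preimage (s := sphere 0 1) isClosed_sphere.measurableSet
  have hpreimage : e.toIsometryEquiv ⁻¹' sphere 0 1 = sphere 0 1 := by
    simp
  rw [hpreimage] at hrestrict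
  exact hrestrict.smul_measure _

variable {u : EuclideanSpace ℝ (Fin m) → ℝ} {x : EuclideanSpace ℝ (Fin m)} {r : ℝ}

theorem sphereMean_eq_integral :
    sphereMean m u x r = ∫ y, u (x + r • y) ∂unitSphereMeasure m :=
  setAverage_eq' _ (fun y => u (x + r • y)) _

@[simp]
theorem sphereMean_zero [NeZero m] : sphereMean m u x 0 = u x := by
  simp [sphereMean_eq_integral]

theorem continuous_sphereMean [NeZero m] (hu : Continuous u) : Continuous (sphereMean m u x) := by
  rw [funext fun t => sphereMean_eq_integral (u := u) (x := x) (r := t)]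
  exact continuous_integral_of_ae_mem_isCompact (isCompact_sphere 0 1)
    ae_mem_sphere_unitSphereMeasure (by fun_prop)

theorem hasDerivAt_sphereMean [NeZero m] (hu : ContDiff ℝ 1 u) :
    HasDerivAt (sphereMean m u x) (∫ y, fderiv ℝ u (x + r • y) y ∂unitSphereMeasure m) r := by
  rw [funext fun t => sphereMean_eq_integral (u := u) (x := x) (r := t)]
  refine hasDerivAt_integral_of_ae_mem_isCompact (isCompact_sphere 0 1)
    ae_mem_sphere_unitSphereMeasure (f' := fun t y => fderiv ℝ u (x + t • y) y)
    (fun t => by fun_prop) (by fun_prop) (fun t y => ?_) r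
  have hline : HasDerivAt (fun s : ℝ => x + s • y) y t := by
    simpa using ((hasDerivAt_id t).smul_const y).const_add x
  exact (hu.differentiable one_ne_zero _).hasFDerivAt.comp_hasDerivAt t hline

theorem hasDerivAt_integral_fderiv_unitSphereMeasure [NeZero m] (hu : ContDiff ℝ 2 u) :
    HasDerivAt (fun t => ∫ y, fderiv ℝ u (x + t • y) y ∂unitSphereMeasure m)
      (∫ y, fderiv ℝ (fderiv ℝ u) (x + r • y) y y ∂unitSphereMeasure m) r := by
  have hfderiv : ContDiff ℝ 1 (fderiv ℝ u) := hu.fderiv_right one_add_one_eq_two.le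
  refine hasDerivAt_integral_of_ae_mem_isCompact (isCompact_sphere 0 1)
    ae_mem_sphere_unitSphereMeasure (f' := fun t y => fderiv ℝ (fderiv ℝ u) (x + t • y) y y)
    (fun t => by fun_prop) (by fun_prop) (fun t y => ?_) r
  have hline : HasDerivAt (fun s : ℝ => x + s • y) y t := by
    simpa using ((hasDerivAt_id t).smul_const y).const_add x
  simpa using ((hfderiv.differentiable one_ne_zero _).hasFDerivAt.comp_hasDerivAt t hline).clm_apply
    (hasDerivAt_const t y)

theorem laplacian_eq_sum_fderiv_fderiv (hu : DifferentiableAt ℝ (fderiv ℝ u) x) :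
    laplacian m u x =
      ∑ i, fderiv ℝ (fderiv ℝ u) x (EuclideanSpace.single i 1) (EuclideanSpace.single i 1) := by
  refine Finset.sum_congr rfl fun i _ => ?_
  rw [(hu.hasFDerivAt.clm_apply (hasFDerivAt_const (EuclideanSpace.single i 1) x)).fderiv]
  simp

theorem continuous_laplacian (hu : ContDiff ℝ 2 u) : Continuous (laplacian m u) := by
  have hfderiv : ContDiff ℝ 1 (fderiv ℝ u) := hu.fderiv_right one_add_one_eq_two.le
  have heq : laplacian m u = _ :=
    funext fun z => laplacian_eq_sum_fderiv_fderiv (hfderiv.differentiable one_ne_zero z)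
  rw [heq]
  fun_prop

-- With `φ r = sphereMean m u x r`, this is Darboux's equation `φ'' + (m - 1) / r * φ' = M(Δu)`.
theorem mul_sphereMean_laplacian [NeZero m] (hu : ContDiff ℝ 2 u) :
    r * sphereMean m (laplacian m u) x r =
      r * ∫ y, fderiv ℝ (fderiv ℝ u) (x + r • y) y y ∂unitSphereMeasure m +
        (m - 1) * ∫ y, fderiv ℝ u (x + r • y) y ∂unitSphereMeasure m := by
  have hfderiv : ContDiff ℝ 1 (fderiv ℝ u) := hu.fderiv_right one_add_one_eq_two.le
  have hint {f : EuclideanSpace ℝ (Fin m) → ℝ} (hf : Continuous f) :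
      Integrable f (unitSphereMeasure m) :=
    integrable_of_continuousOn_of_ae_mem_isCompact (isCompact_sphere 0 1)
      ae_mem_sphere_unitSphereMeasure hf.continuousOn
  have hG : ContDiff ℝ 1 fun y => fderiv ℝ u (x + r • y) := hfderiv.comp (by fun_prop)
  have hG_fderiv (y : EuclideanSpace ℝ (Fin m)) : fderiv ℝ (fun z => fderiv ℝ u (x + r • z)) y =
      r • fderiv ℝ (fderiv ℝ u) (x + r • y) := by
    have hline : HasFDerivAt (fun z => x + r • z) (r • ContinuousLinearMap.id ℝ _) y :=
      ((hasFDerivAt_id y).const_smul r).const_add x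
    refine ((hfderiv.differentiable one_ne_zero _).hasFDerivAt.comp y hline).fderiv.trans ?_
    rw [ContinuousLinearMap.comp_smul, ContinuousLinearMap.comp_id]
  have hdiv := integral_sum_fderiv_apply_orthonormalBasis (EuclideanSpace.basisFun (Fin m) ℝ)
    ae_mem_sphere_unitSphereMeasure measurePreserving_unitSphereMeasure hG
  simp only [hG_fderiv, EuclideanSpace.basisFun_apply, Fintype.card_fin, smul_apply, smul_eq_mul,
    ← Finset.mul_sum] at hdiv
  rw [integral_add (hint (by fun_prop)) (hint (by fun_prop)), integral_const_mul,
    integral_const_mul, integral_const_mul] at hdiv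
  rw [sphereMean_eq_integral, ← hdiv]
  simp only [laplacian_eq_sum_fderiv_fderiv (hfderiv.differentiable one_ne_zero _)]

end SphericalMeans

section ScaledMeans

theorem tendsto_integral_of_tendstoUniformlyOn {α X F : Type*} [MeasurableSpace X]
    [NormedAddCommGroup F] [NormedSpace ℝ F] {ν : Measure X} [IsFiniteMeasure ν] {K : Set X}
    (hν : ∀ᵐ y ∂ν, y ∈ K) {l : Filter α} {f : α → X → F} {g : X → F}
    (hfg : TendstoUniformlyOn f g l K) (hf : ∀ᶠ a in l, Integrable (f a) ν)
    (hg : Integrable g ν) :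
    Filter.Tendsto (fun a => ∫ y, f a y ∂ν) l (nhds (∫ y, g y ∂ν)) := by
  rw [Metric.tendsto_nhds]
  intro ε hε
  obtain ⟨δ, hδ, hδε⟩ := exists_pos_mul_lt hε (ν.real Set.univ)
  filter_upwards [hf, Metric.tendstoUniformlyOn_iff.1 hfg δ hδ] with a hfa hdist
  rw [dist_eq_norm, ← integral_sub hfa hg]
  refine (norm_integral_le_of_norm_le_const (C := δ) (hν.mono fun y hy => ?_)).trans_lt
    (by rwa [mul_comm])
  rw [← dist_eq_norm, dist_comm]
  exact (hdist y hy).le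

variable {E : Type*} [NormedAddCommGroup E] [NormedSpace ℝ E]

theorem mapsTo_add_smul_closedBall (x : E) {r : ℝ} (hr : 0 ≤ r) :
    Set.MapsTo (fun y => x + r • y) (closedBall 0 1) (closedBall x r) := by
  intro y hy
  rw [mem_closedBall_iff_norm, add_sub_cancel_left, norm_smul, Real.norm_of_nonneg hr]
  exact mul_le_of_le_one_right hr (mem_closedBall_zero_iff.1 hy)

variable [MeasurableSpace E] {ν : Measure E}

theorem integral_comp_add_smul_congr (hν : ∀ᵐ y ∂ν, y ∈ closedBall 0 1) {f g : E → ℝ} {x : E}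
    {r : ℝ} (hr : 0 ≤ r) (hfg : Set.EqOn f g (closedBall x r)) :
    ∫ y, f (x + r • y) ∂ν = ∫ y, g (x + r • y) ∂ν :=
  integral_congr_ae (hν.mono fun _ hy => hfg (mapsTo_add_smul_closedBall x hr hy))

variable [ProperSpace E] [BorelSpace E] [IsFiniteMeasure ν]

theorem integrable_comp_add_smul (hν : ∀ᵐ y ∂ν, y ∈ closedBall 0 1) {f : E → ℝ} {x : E} {r : ℝ}
    (hr : 0 ≤ r) (hf : ContinuousOn f (closedBall x r)) : Integrable (fun y => f (x + r • y)) ν :=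
  integrable_of_continuousOn_of_ae_mem_isCompact (isCompact_closedBall 0 1) hν
    (hf.comp (by fun_prop) (mapsTo_add_smul_closedBall x hr))

theorem tendsto_integral_comp_add_smul {α : Type*} {l : Filter α} [l.NeBot]
    (hν : ∀ᵐ y ∂ν, y ∈ closedBall 0 1) {f : α → E → ℝ} {g : E → ℝ} {x : E} {r : ℝ} (hr : 0 ≤ r)
    (hfg : TendstoUniformlyOn f g l (closedBall x r))
    (hf : ∀ᶠ a in l, ContinuousOn (f a) (closedBall x r)) :
    Filter.Tendsto (fun a => ∫ y, f a (x + r • y) ∂ν) l (nhds (∫ y, g (x + r • y) ∂ν)) :=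
  tendsto_integral_of_tendstoUniformlyOn hν
    ((hfg.comp (fun y => x + r • y)).mono (mapsTo_add_smul_closedBall x hr))
    (hf.mono fun _ ha => integrable_comp_add_smul hν hr ha)
    (integrable_comp_add_smul hν hr (hfg.continuousOn hf.frequently))

end ScaledMeans

section Laplacian

variable {m : ℕ} {u v : EuclideanSpace ℝ (Fin m) → ℝ} {x : EuclideanSpace ℝ (Fin m)}
  {D : Set (EuclideanSpace ℝ (Fin m))}

theorem laplacian_congr (huv : u =ᶠ[nhds x] v) : laplacian m u x = laplacian m v x := by
  refine Finset.sum_congr rfl fun i _ => ?_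
  have hfderiv : (fun y => fderiv ℝ u y (EuclideanSpace.single i 1)) =ᶠ[nhds x]
      fun y => fderiv ℝ v y (EuclideanSpace.single i 1) :=
    (huv.fderiv (𝕜 := ℝ)).mono fun y hy => by simp only [hy]
  rw [hfderiv.fderiv_eq]

theorem exists_contDiff_eventuallyEq_nhdsSet {E F : Type*} [NormedAddCommGroup E]
    [NormedSpace ℝ E] [FiniteDimensional ℝ E] [NormedAddCommGroup F] [NormedSpace ℝ F] {n : ℕ∞}
    {K U : Set E} (hK : IsClosed K) (hU : IsOpen U) (hKU : K ⊆ U) {f : E → F}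
    (hf : ContDiffOn ℝ n f U) : ∃ g : E → F, ContDiff ℝ n g ∧ g =ᶠ[nhdsSet K] f := by
  obtain ⟨χ, hχ_zero, hχ_one, -⟩ := exists_contMDiffMap_zero_one_nhds_of_isClosed (n := n)
    (modelWithCornersSelf ℝ E) hU.isClosed_compl hK (Set.disjoint_compl_left_iff_subset.2 hKU)
  refine ⟨fun z => χ z • f z, contDiff_iff_contDiffAt.2 fun z => ?_, ?_⟩
  · by_cases hz : z ∈ U
    · exact χ.contMDiff.contDiff.contDiffAt.smul (hf.contDiffAt (hU.mem_nhds hz))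
    · refine (contDiffAt_const (c := 0)).congr_of_eventuallyEq ?_
      filter_upwards [eventually_nhdsSet_iff_forall.1 hχ_zero z hz] with y hy
      rw [hy, zero_smul]
  · filter_upwards [hχ_one] with y hy
    rw [hy, one_smul]

theorem continuousOn_laplacian (hD : IsOpen D) (hu : ContDiffOn ℝ 2 u D) :
    ContinuousOn (laplacian m u) D := by
  intro x hx
  obtain ⟨w, hw, hwu⟩ := exists_contDiff_eventuallyEq_nhdsSet (n := 2) isClosed_singleton hD
    (Set.singleton_subset_iff.2 hx) hu
  rw [nhdsSet_singleton] at hwu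
  exact ((continuous_laplacian hw).continuousAt.congr
    (hwu.eventually_nhds.mono fun _ => laplacian_congr)).continuousWithinAt

end Laplacian

section BallGreenMeasure

/-- Green's function of the unit ball of `ℝ³` with pole at the centre, as a measure. In polar
coordinates `t • y` it is `t * (1 - t)` times Lebesgue measure in `t` times the normalized surface
measure in `y`. -/
noncomputable def ballGreenMeasure : Measure (EuclideanSpace ℝ (Fin 3)) :=
  (((volume.restrict (Set.Icc (0 : ℝ) 1)).withDensity fun t => ENNReal.ofReal (t * (1 - t))).prod
    (unitSphereMeasure 3)).map fun p => p.1 • p.2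

instance isFiniteMeasure_ballGreenDensity : IsFiniteMeasure
    ((volume.restrict (Set.Icc (0 : ℝ) 1)).withDensity fun t => ENNReal.ofReal (t * (1 - t))) :=
  isFiniteMeasure_withDensity_ofReal
    ((by fun_prop : Continuous fun t : ℝ => t * (1 - t)).integrableOn_Icc).2

instance : IsFiniteMeasure ballGreenMeasure := Measure.isFiniteMeasure_map _ _

theorem ae_mem_closedBall_ballGreenMeasure : ∀ᵐ y ∂ballGreenMeasure, y ∈ closedBall 0 1 := by
  refine (ae_map_iff (by fun_prop) isClosed_closedBall.measurableSet).2 ?_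
  filter_upwards [Measure.quasiMeasurePreserving_fst.ae
      ((withDensity_absolutelyContinuous _ _).ae_le (ae_restrict_mem measurableSet_Icc)),
    Measure.quasiMeasurePreserving_snd.ae ae_mem_sphere_unitSphereMeasure] with p ht hy
  exact mem_closedBall_zero_iff.2 (by
    rw [norm_smul, mem_sphere_zero_iff_norm.1 hy, mul_one, Real.norm_of_nonneg ht.1]
    exact ht.2)

theorem integral_ballGreenMeasure {f : EuclideanSpace ℝ (Fin 3) → ℝ} (hf : Continuous f) :
    ∫ y, f y ∂ballGreenMeasure =
      ∫ t in (0 : ℝ)..1, t * (1 - t) * ∫ y, f (t • y) ∂unitSphereMeasure 3 := by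
  have hint : Integrable f ballGreenMeasure := integrable_of_continuousOn_of_ae_mem_isCompact
    (isCompact_closedBall 0 1) ae_mem_closedBall_ballGreenMeasure hf.continuousOn
  have hint_prod : Integrable (fun p : ℝ × EuclideanSpace ℝ (Fin 3) => f (p.1 • p.2)) _ :=
    (integrable_map_measure hf.aestronglyMeasurable (by fun_prop)).1 hint
  unfold ballGreenMeasure
  rw [integral_map (by fun_prop) hf.aestronglyMeasurable, integral_prod _ hint_prod,
    integral_withDensity_eq_integral_toReal_smul (by fun_prop) (by simp),
    intervalIntegral.integral_of_le zero_le_one, ← integral_Icc_eq_integral_Ioc]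
  refine setIntegral_congr_fun measurableSet_Icc fun t ht => ?_
  simp only [smul_eq_mul, ENNReal.toReal_ofReal (mul_nonneg ht.1 (sub_nonneg.2 ht.2))]

theorem integral_ballGreenMeasure_comp_add_smul {f : EuclideanSpace ℝ (Fin 3) → ℝ}
    (hf : Continuous f) (x : EuclideanSpace ℝ (Fin 3)) (r : ℝ) :
    ∫ y, f (x + r • y) ∂ballGreenMeasure =
      ∫ t in (0 : ℝ)..1, t * (1 - t) * sphereMean 3 f x (r * t) := by
  rw [integral_ballGreenMeasure (f := fun y => f (x + r • y)) (by fun_prop)]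
  simp only [sphereMean_eq_integral, smul_smul]

theorem measureReal_univ_ballGreenMeasure : ballGreenMeasure.real Set.univ = 1 / 6 := by
  have h := integral_ballGreenMeasure (f := fun _ => 1) continuous_const
  simp only [integral_const, smul_eq_mul, mul_one, probReal_univ] at h
  rw [h]
  simp [mul_sub, ← pow_two]
  norm_num

theorem sphereMean_eq_add_integral_ballGreenMeasure {w : EuclideanSpace ℝ (Fin 3) → ℝ}
    (hw : ContDiff ℝ 2 w) (x : EuclideanSpace ℝ (Fin 3)) (r : ℝ) :
    sphereMean 3 w x r =
      w x + r ^ 2 * ∫ y, laplacian 3 w (x + r • y) ∂ballGreenMeasure := by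
  let φ' (t : ℝ) := ∫ y, fderiv ℝ w (x + t • y) y ∂unitSphereMeasure 3
  have hφ (t : ℝ) : HasDerivAt (fun s => sphereMean 3 w x (r * s)) (φ' (r * t) * r) t :=
    (hasDerivAt_sphereMean (hw.of_le one_le_two)).comp t
      (by simpa using (hasDerivAt_id t).const_mul r)
  have hφ' (t : ℝ) : HasDerivAt (fun s => φ' (r * s))
      ((∫ y, fderiv ℝ (fderiv ℝ w) (x + (r * t) • y) y y ∂unitSphereMeasure 3) * r) t :=
    (hasDerivAt_integral_fderiv_unitSphereMeasure hw).comp t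
      (by simpa using (hasDerivAt_id t).const_mul r)
  have hprimitive (t : ℝ) : HasDerivAt
      (fun s => sphereMean 3 w x (r * s) + s * (1 - s) * (r * φ' (r * s)))
      (r ^ 2 * (t * (1 - t) * sphereMean 3 (laplacian 3 w) x (r * t))) t := by
    refine ((hφ t).add (((hasDerivAt_id t).mul ((hasDerivAt_id t).const_sub 1)).mul
      ((hφ' t).const_mul r))).congr_deriv ?_
    simp only [id_eq, Pi.mul_apply]
    linear_combination (-(r * (1 - t))) * mul_sphereMean_laplacian (x := x) (r := r * t) hw
  have hcont : Continuous fun t =>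
      r ^ 2 * (t * (1 - t) * sphereMean 3 (laplacian 3 w) x (r * t)) :=
    continuous_const.mul ((by fun_prop : Continuous fun t : ℝ => t * (1 - t)).mul
      ((continuous_sphereMean (continuous_laplacian hw)).comp (by fun_prop)))
  rw [integral_ballGreenMeasure_comp_add_smul (continuous_laplacian hw),
    ← intervalIntegral.integral_const_mul, intervalIntegral.integral_eq_sub_of_hasDerivAt
      (fun t _ => hprimitive t) (hcont.intervalIntegrable 0 1)]
  simp

end BallGreenMeasure

section ComparisonOfSphericalMeans

variable {m : ℕ} {u v : EuclideanSpace ℝ (Fin m) → ℝ} {x : EuclideanSpace ℝ (Fin m)} {r : ℝ}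

theorem sphereMean_congr (hr : 0 ≤ r) (huv : Set.EqOn u v (closedBall x r)) :
    sphereMean m u x r = sphereMean m v x r := by
  simp only [sphereMean_eq_integral,
    integral_comp_add_smul_congr ae_mem_closedBall_unitSphereMeasure hr huv]

theorem sphereMean_sub [NeZero m] (hr : 0 ≤ r) (hu : ContinuousOn u (closedBall x r))
    (hv : ContinuousOn v (closedBall x r)) :
    sphereMean m (u - v) x r = sphereMean m u x r - sphereMean m v x r := by
  simp only [sphereMean_eq_integral]
  exact integral_sub (integrable_comp_add_smul ae_mem_closedBall_unitSphereMeasure hr hu)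
    (integrable_comp_add_smul ae_mem_closedBall_unitSphereMeasure hr hv)

theorem sphereMean_le_of_forall_mem_closedBall_le [NeZero m] {c : ℝ} (hr : 0 ≤ r)
    (hu : ContinuousOn u (closedBall x r)) (hc : ∀ z ∈ closedBall x r, u z ≤ c) :
    sphereMean m u x r ≤ c := by
  have hmono : ∫ y, u (x + r • y) ∂unitSphereMeasure m ≤ ∫ _, c ∂unitSphereMeasure m :=
    integral_mono_ae (integrable_comp_add_smul ae_mem_closedBall_unitSphereMeasure hr hu)
      (integrable_const c) (ae_mem_closedBall_unitSphereMeasure.mono fun y hy =>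
        hc _ (mapsTo_add_smul_closedBall x hr hy))
  simpa [sphereMean_eq_integral] using hmono

end ComparisonOfSphericalMeans

/-- Mean-value form of the Poisson equation `Δv = F` in `D ⊆ ℝ³`: every spherical mean of `v` is
given by Green's representation formula with source `F`. It makes sense for continuous `v` and is
stable under uniform limits. -/
structure IsWeakPoissonSolution (D : Set (EuclideanSpace ℝ (Fin 3)))
    (v F : EuclideanSpace ℝ (Fin 3) → ℝ) : Prop where
  continuousOn : ContinuousOn v D
  continuousOn_source : ContinuousOn F D
  sphereMean_eq : ∀ x r, 0 < r → closedBall x r ⊆ D →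
    sphereMean 3 v x r = v x + r ^ 2 * ∫ y, F (x + r • y) ∂ballGreenMeasure

namespace IsWeakPoissonSolution

variable {D : Set (EuclideanSpace ℝ (Fin 3))} {v w F G : EuclideanSpace ℝ (Fin 3) → ℝ}
  {x : EuclideanSpace ℝ (Fin 3)}

theorem congr (h : IsWeakPoissonSolution D v F) (hv : Set.EqOn w v D) (hF : Set.EqOn G F D) :
    IsWeakPoissonSolution D w G where
  continuousOn := h.continuousOn.congr hv
  continuousOn_source := h.continuousOn_source.congr hF
  sphereMean_eq x r hr hball := by
    rw [sphereMean_congr hr.le (hv.mono hball), hv (hball (mem_closedBall_self hr.le)),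
      integral_comp_add_smul_congr ae_mem_closedBall_ballGreenMeasure hr.le (hF.mono hball),
      h.sphereMean_eq x r hr hball]

theorem zero : IsWeakPoissonSolution D 0 0 where
  continuousOn := continuousOn_const
  continuousOn_source := continuousOn_const
  sphereMean_eq x r _ _ := by simp [sphereMean_eq_integral]

theorem add (hv : IsWeakPoissonSolution D v F) (hw : IsWeakPoissonSolution D w G) :
    IsWeakPoissonSolution D (v + w) (F + G) where
  continuousOn := hv.continuousOn.add hw.continuousOn
  continuousOn_source := hv.continuousOn_source.add hw.continuousOn_source
  sphereMean_eq x r hr hball := by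
    have hmean := congrArg₂ (· + ·) (hv.sphereMean_eq x r hr hball) (hw.sphereMean_eq x r hr hball)
    have hint {f : EuclideanSpace ℝ (Fin 3) → ℝ} (hf : ContinuousOn f D) :
        Integrable (fun y => f (x + r • y)) (unitSphereMeasure 3) :=
      integrable_comp_add_smul ae_mem_closedBall_unitSphereMeasure hr.le (hf.mono hball)
    have hint_source {f : EuclideanSpace ℝ (Fin 3) → ℝ} (hf : ContinuousOn f D) :
        Integrable (fun y => f (x + r • y)) ballGreenMeasure :=
      integrable_comp_add_smul ae_mem_closedBall_ballGreenMeasure hr.le (hf.mono hball)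
    simp only [sphereMean_eq_integral, Pi.add_apply] at hmean ⊢
    rw [integral_add (hint hv.continuousOn) (hint hw.continuousOn), hmean, integral_add
      (hint_source hv.continuousOn_source) (hint_source hw.continuousOn_source)]
    ring

theorem const_smul (h : IsWeakPoissonSolution D v F) (c : ℝ) :
    IsWeakPoissonSolution D (c • v) (c • F) where
  continuousOn := h.continuousOn.const_smul c
  continuousOn_source := h.continuousOn_source.const_smul c
  sphereMean_eq x r hr hball := by
    have hmean := congrArg (c * ·) (h.sphereMean_eq x r hr hball)
    simp only [sphereMean_eq_integral, Pi.smul_apply, smul_eq_mul, integral_const_mul] at hmean ⊢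
    rw [hmean]
    ring

theorem neg (h : IsWeakPoissonSolution D v F) : IsWeakPoissonSolution D (-v) (-F) := by
  simpa only [neg_one_smul] using h.const_smul (-1)

theorem of_tendstoUniformlyOn {α : Type*} {l : Filter α} [l.NeBot]
    {V S : α → EuclideanSpace ℝ (Fin 3) → ℝ} (h : ∀ a, IsWeakPoissonSolution D (V a) (S a))
    (hV : TendstoUniformlyOn V v l D) (hS : TendstoUniformlyOn S F l D) :
    IsWeakPoissonSolution D v F where
  continuousOn := hV.continuousOn (.of_forall fun a => (h a).continuousOn)
  continuousOn_source := hS.continuousOn (.of_forall fun a => (h a).continuousOn_source)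
  sphereMean_eq x r hr hball := by
    have hmean := tendsto_integral_comp_add_smul ae_mem_closedBall_unitSphereMeasure hr.le
      (hV.mono hball) (.of_forall fun a => (h a).continuousOn.mono hball)
    have hsource := tendsto_integral_comp_add_smul ae_mem_closedBall_ballGreenMeasure hr.le
      (hS.mono hball) (.of_forall fun a => (h a).continuousOn_source.mono hball)
    have hcenter := hV.tendsto_at (hball (mem_closedBall_self hr.le))
    rw [sphereMean_eq_integral]
    refine tendsto_nhds_unique hmean ((hcenter.add (hsource.const_mul (r ^ 2))).congr fun a => ?_)
    rw [← sphereMean_eq_integral, (h a).sphereMean_eq x r hr hball]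

theorem of_contDiffOn (hD : IsOpen D) (hv : ContDiffOn ℝ 2 v D) :
    IsWeakPoissonSolution D v (laplacian 3 v) where
  continuousOn := hv.continuousOn
  continuousOn_source := continuousOn_laplacian hD hv
  sphereMean_eq x r hr hball := by
    obtain ⟨w, hw, hwv⟩ :=
      exists_contDiff_eventuallyEq_nhdsSet (n := 2) isClosed_closedBall hD hball hv
    have hwv_nhds (z) (hz : z ∈ closedBall x r) : w =ᶠ[nhds z] v :=
      eventually_nhdsSet_iff_forall.1 hwv z hz
    have heq : Set.EqOn v w (closedBall x r) := fun z hz => (hwv_nhds z hz).eq_of_nhds.symm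
    have hlap : Set.EqOn (laplacian 3 v) (laplacian 3 w) (closedBall x r) := fun z hz =>
      (laplacian_congr (hwv_nhds z hz)).symm
    rw [sphereMean_congr hr.le heq, heq (mem_closedBall_self hr.le),
      integral_comp_add_smul_congr ae_mem_closedBall_ballGreenMeasure hr.le hlap,
      sphereMean_eq_add_integral_ballGreenMeasure hw]

theorem tendsto_sphereMean_sub_div_sq (h : IsWeakPoissonSolution D v F) (hx : D ∈ nhds x) :
    Filter.Tendsto (fun r => (sphereMean 3 v x r - v x) / r ^ 2) (nhdsWithin 0 (Set.Ioi 0))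
      (nhds (F x / 6)) := by
  obtain ⟨δ, hδ, hball⟩ := nhds_basis_closedBall.mem_iff.1 hx
  have hsmall : ∀ᶠ r : ℝ in nhdsWithin 0 (Set.Ioi 0), 0 < r ∧ closedBall x r ⊆ D := by
    filter_upwards [Ioc_mem_nhdsGT hδ] with r hr
    exact ⟨hr.1, (closedBall_subset_closedBall hr.2).trans hball⟩
  have hlim : Filter.Tendsto (fun r : ℝ => ∫ y, F (x + r • y) ∂ballGreenMeasure)
      (nhdsWithin 0 (Set.Ioi 0)) (nhds (∫ _, F x ∂ballGreenMeasure)) := by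
    refine tendsto_integral_of_tendstoUniformlyOn ae_mem_closedBall_ballGreenMeasure ?_
      (hsmall.mono fun r hr => integrable_comp_add_smul ae_mem_closedBall_ballGreenMeasure hr.1.le
        (h.continuousOn_source.mono hr.2)) (integrable_const _)
    rw [Metric.tendstoUniformlyOn_iff]
    intro ε hε
    obtain ⟨η, hη, hclose⟩ := nhds_basis_closedBall.mem_iff.1
      ((h.continuousOn_source.continuousAt hx).preimage_mem_nhds (ball_mem_nhds _ hε))
    filter_upwards [Ioc_mem_nhdsGT hη] with r hr y hy
    exact mem_ball'.1 (hclose (closedBall_subset_closedBall hr.2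
      (mapsTo_add_smul_closedBall x hr.1.le hy)))
  rw [integral_const, measureReal_univ_ballGreenMeasure, smul_eq_mul, one_div_mul_eq_div] at hlim
  refine hlim.congr' (hsmall.mono fun r hr => ?_)
  simp only [h.sphereMean_eq x r hr.1 hr.2, add_sub_cancel_left]
  rw [mul_div_cancel_left₀ _ (pow_ne_zero 2 hr.1.ne')]

theorem source_unique (hF : IsWeakPoissonSolution D v F) (hG : IsWeakPoissonSolution D v G)
    (hD : IsOpen D) : Set.EqOn F G D := fun x hx =>
  (div_left_inj' (by norm_num)).1 (tendsto_nhds_unique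
    (hF.tendsto_sphereMean_sub_div_sq (hD.mem_nhds hx))
    (hG.tendsto_sphereMean_sub_div_sq (hD.mem_nhds hx)))

theorem source_nonpos_of_isMaxOn (h : IsWeakPoissonSolution D v F) (hx : D ∈ nhds x)
    (hmax : IsMaxOn v D x) : F x ≤ 0 := by
  obtain ⟨δ, hδ, hball⟩ := nhds_basis_closedBall.mem_iff.1 hx
  suffices F x / 6 ≤ 0 by linarith
  refine le_of_tendsto (h.tendsto_sphereMean_sub_div_sq hx) ?_
  filter_upwards [Ioc_mem_nhdsGT hδ] with r hr
  have hball_r := (closedBall_subset_closedBall hr.2).trans hball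
  have hmean : sphereMean 3 v x r ≤ v x := sphereMean_le_of_forall_mem_closedBall_le hr.1.le
    (h.continuousOn.mono hball_r) fun z hz => hmax (hball_r hz)
  exact div_nonpos_of_nonpos_of_nonneg (sub_nonpos.2 hmean) (sq_nonneg r)

end IsWeakPoissonSolution

section Comparison

theorem nonpos_on_closure_of_forall_not_isMaxOn {X : Type*} [TopologicalSpace X] {D : Set X}
    (hD : IsCompact (closure D)) {e : X → ℝ} (he : ContinuousOn e (closure D))
    (hfrontier : ∀ z ∈ frontier D, e z ≤ 0) (hinterior : ∀ x ∈ D, 0 < e x → ¬IsMaxOn e D x) :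
    ∀ z ∈ closure D, e z ≤ 0 := by
  intro z hz
  obtain ⟨x, hx, hmax⟩ := hD.exists_isMaxOn ⟨z, hz⟩ he
  refine (hmax hz).trans ?_
  rw [closure_eq_interior_union_frontier] at hx
  rcases hx with hx | hx
  · exact not_lt.1 fun hpos =>
      hinterior x (interior_subset hx) hpos (hmax.on_subset subset_closure)
  · exact hfrontier x hx

end Comparison

section LaplacianExamples

variable {m : ℕ} (x : EuclideanSpace ℝ (Fin m))

theorem laplacian_norm_sq_sub_const (b : ℝ) :
    laplacian m (fun z => ‖z‖ ^ 2 - b) x = 2 * m := by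
  have hfderiv : HasFDerivAt (fderiv ℝ fun z : EuclideanSpace ℝ (Fin m) => ‖z‖ ^ 2 - b)
      (2 • (innerSL ℝ : EuclideanSpace ℝ (Fin m) →L[ℝ] EuclideanSpace ℝ (Fin m) →L[ℝ] ℝ)) x := by
    refine (ContinuousLinearMap.hasFDerivAt _).congr_of_eventuallyEq (.of_forall fun y => ?_)
    rw [fderiv_sub_const, fderiv_norm_sq_apply]
    rfl
  rw [laplacian_eq_sum_fderiv_fderiv hfderiv.differentiableAt, hfderiv.fderiv]
  change ∑ i : Fin m, 2 • inner ℝ (EuclideanSpace.single i (1 : ℝ)) (EuclideanSpace.single i 1) = _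
  simp [mul_comm]

theorem laplacian_exp_inner (ξ : EuclideanSpace ℝ (Fin m)) :
    laplacian m (fun z => Real.exp (inner ℝ ξ z)) x = ‖ξ‖ ^ 2 * Real.exp (inner ℝ ξ x) := by
  have hexp (y : EuclideanSpace ℝ (Fin m)) : HasFDerivAt (fun z => Real.exp (inner ℝ ξ z))
      (Real.exp (inner ℝ ξ y) • innerSL ℝ ξ) y := (innerSL ℝ ξ).hasFDerivAt.exp
  have hfderiv : HasFDerivAt (fderiv ℝ fun z => Real.exp (inner ℝ ξ z))
      ((Real.exp (inner ℝ ξ x) • innerSL ℝ ξ).smulRight (innerSL ℝ ξ)) x := by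
    rw [funext fun y => (hexp y).fderiv]
    exact (hexp x).smul_const (innerSL ℝ ξ)
  rw [laplacian_eq_sum_fderiv_fderiv hfderiv.differentiableAt, hfderiv.fderiv,
    EuclideanSpace.norm_sq_eq, Finset.sum_mul]
  refine Finset.sum_congr rfl fun i _ => ?_
  simp [EuclideanSpace.inner_single_right]
  ring

end LaplacianExamples

namespace IsWeakPoissonSolution

variable {D : Set (EuclideanSpace ℝ (Fin 3))} {v F : EuclideanSpace ℝ (Fin 3) → ℝ}

theorem norm_sq_sub_const (hD : IsOpen D) (b : ℝ) :
    IsWeakPoissonSolution D (fun z => ‖z‖ ^ 2 - b) fun _ => 6 :=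
  (of_contDiffOn hD ((contDiff_norm_sq ℝ).sub contDiff_const).contDiffOn).congr (fun _ _ => rfl)
    fun x _ => by rw [laplacian_norm_sq_sub_const]; norm_num

-- The barrier `A / 6 * (‖z‖ ^ 2 - R ^ 2)` turns `v` into a strict subsolution.
theorem le_of_lt_source_sub (h : IsWeakPoissonSolution D v F) (hD : IsOpen D) {R : ℝ}
    (hDR : D ⊆ closedBall 0 R) (hv : ContinuousOn v (closure D))
    (hfrontier : ∀ z ∈ frontier D, v z ≤ 0) {l A : ℝ} (hl : 0 ≤ l) (hA : 0 ≤ A)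
    (hF : ∀ z ∈ D, -A < F z - l * v z) : ∀ z ∈ closure D, v z ≤ R ^ 2 / 6 * A := by
  have hbarrier : ∀ z ∈ closure D, A / 6 * (‖z‖ ^ 2 - R ^ 2) ≤ 0 := fun z hz => by
    have hz : ‖z‖ ≤ R :=
      mem_closedBall_zero_iff.1 (closure_minimal hDR isClosed_closedBall hz)
    exact mul_nonpos_of_nonneg_of_nonpos (by positivity)
      (sub_nonpos.2 (pow_le_pow_left₀ (norm_nonneg z) hz 2))
  have hsub := h.add ((norm_sq_sub_const hD (R ^ 2)).const_smul (A / 6))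
  have hnonpos := nonpos_on_closure_of_forall_not_isMaxOn
    (e := v + (A / 6) • fun z => ‖z‖ ^ 2 - R ^ 2)
    ((isCompact_closedBall _ R).of_isClosed_subset isClosed_closure
      (closure_minimal hDR isClosed_closedBall)) (hv.add (by fun_prop))
    (fun z hz => add_nonpos (hfrontier z hz) (hbarrier z (frontier_subset_closure hz)))
    (fun x hx hpos hmax => by
      have hsource := hsub.source_nonpos_of_isMaxOn (hD.mem_nhds hx) hmax
      have hvx : 0 < v x := by
        have := hbarrier x (subset_closure hx)
        simp only [Pi.add_apply, Pi.smul_apply, smul_eq_mul] at hpos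
        linarith
      simp only [Pi.add_apply, Pi.smul_apply, smul_eq_mul] at hsource
      linarith [hF x hx, mul_nonneg hl hvx.le])
  intro z hz
  have hvz := hnonpos z hz
  simp only [Pi.add_apply, Pi.smul_apply, smul_eq_mul] at hvz
  nlinarith [mul_nonneg hA (sq_nonneg ‖z‖)]

theorem le_of_le_source_sub (h : IsWeakPoissonSolution D v F) (hD : IsOpen D) {R : ℝ}
    (hDR : D ⊆ closedBall 0 R) (hv : ContinuousOn v (closure D))
    (hfrontier : ∀ z ∈ frontier D, v z ≤ 0) {l A : ℝ} (hl : 0 ≤ l) (hA : 0 ≤ A)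
    (hF : ∀ z ∈ D, -A ≤ F z - l * v z) : ∀ z ∈ closure D, v z ≤ R ^ 2 / 6 * A := by
  intro z hz
  have hlim : Filter.Tendsto (fun B => R ^ 2 / 6 * B) (nhdsWithin A (Set.Ioi A))
      (nhds (R ^ 2 / 6 * A)) :=
    (by fun_prop : Continuous fun B => R ^ 2 / 6 * B).continuousWithinAt
  refine ge_of_tendsto hlim ?_
  filter_upwards [self_mem_nhdsWithin] with B hB
  have hAB : A < B := hB
  exact h.le_of_lt_source_sub hD hDR hv hfrontier hl (hA.trans hAB.le)
    (fun y hy => (neg_lt_neg hAB).trans_le (hF y hy)) z hz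

theorem abs_le_of_abs_source_sub_le (h : IsWeakPoissonSolution D v F) (hD : IsOpen D) {R : ℝ}
    (hDR : D ⊆ closedBall 0 R) (hv : ContinuousOn v (closure D))
    (hfrontier : ∀ z ∈ frontier D, v z = 0) {l A : ℝ} (hl : 0 ≤ l) (hA : 0 ≤ A)
    (hF : ∀ z ∈ D, |F z - l * v z| ≤ A) : ∀ z ∈ closure D, |v z| ≤ R ^ 2 / 6 * A := by
  intro z hz
  refine abs_le'.2 ⟨h.le_of_le_source_sub hD hDR hv (fun y hy => (hfrontier y hy).le) hl hA
    (fun y hy => (abs_le.1 (hF y hy)).1) z hz, ?_⟩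
  refine h.neg.le_of_le_source_sub hD hDR hv.neg (fun y hy => ?_) hl hA (fun y hy => ?_) z hz
  · rw [Pi.neg_apply, hfrontier y hy, neg_zero]
  · simp only [Pi.neg_apply]
    linarith [(abs_le.1 (hF y hy)).2]

end IsWeakPoissonSolution

section Exponentials

variable {E : Type*} [NormedAddCommGroup E] [InnerProductSpace ℝ E]

/-- The exponential `z ↦ exp ⟪ξ, z⟫` with frequency `ξ`, as a continuous function on `K`. -/
noncomputable def expInner (K : Set E) (ξ : E) : C(K, ℝ) :=
  ⟨fun z => Real.exp (inner ℝ ξ z.1), by fun_prop⟩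

theorem adjoin_range_expInner_eq_span (K : Set E) :
    Subalgebra.toSubmodule (Algebra.adjoin ℝ (Set.range (expInner K))) =
      Submodule.span ℝ (Set.range (expInner K)) := by
  refine Algebra.adjoin_eq_span_of_subset ℝ (subset_trans (fun f hf => ?_) Submodule.subset_span)
  induction hf using Submonoid.closure_induction with
  | mem _ hf => exact hf
  | one => exact ⟨0, by ext z; simp [expInner]⟩
  | mul f g _ _ hf hg =>
    obtain ⟨ξ, rfl⟩ := hf
    obtain ⟨η, rfl⟩ := hg
    exact ⟨ξ + η, by ext z; simp [expInner, inner_add_left, Real.exp_add]⟩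

theorem dense_span_range_expInner (K : Set E) [CompactSpace K] :
    Dense (Submodule.span ℝ (Set.range (expInner K)) : Set C(K, ℝ)) := by
  have hseparates : (Algebra.adjoin ℝ (Set.range (expInner K))).SeparatesPoints := by
    intro a b hab
    refine ⟨_, ⟨expInner K (a.1 - b.1), Algebra.subset_adjoin ⟨_, rfl⟩, rfl⟩, fun heq => hab ?_⟩
    simp only [expInner, ContinuousMap.coe_mk, Real.exp_eq_exp] at heq
    rwa [← sub_eq_zero, ← inner_sub_right, inner_self_eq_zero, sub_eq_zero,
      ← Subtype.ext_iff] at heq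
  rw [← adjoin_range_expInner_eq_span, Subalgebra.coe_toSubmodule, dense_iff_closure_eq,
    ← Subalgebra.topologicalClosure_coe,
    ContinuousMap.subalgebra_topologicalClosure_eq_top_of_separatesPoints _ hseparates,
    Algebra.coe_top]

end Exponentials

section ExtensionByZero

variable {X : Type*} [TopologicalSpace X] {K : Set X}

theorem continuousOn_extend_val (f : C(K, ℝ)) :
    ContinuousOn (Function.extend Subtype.val f 0) K := by
  rw [continuousOn_iff_continuous_domRestrict]
  convert f.continuous using 1
  exact funext fun z => Function.extend_val_apply z.2

theorem tendstoUniformlyOn_extend_val [CompactSpace K] {α : Type*} {l : Filter α} {f : α → C(K, ℝ)}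
    {g : C(K, ℝ)} (hfg : Filter.Tendsto f l (nhds g)) :
    TendstoUniformlyOn (fun a => Function.extend Subtype.val (f a) 0)
      (Function.extend Subtype.val g 0) l K := by
  rw [tendstoUniformlyOn_iff_tendstoUniformly_comp_coe]
  simpa only [Function.comp_def, Subtype.val_injective.extend_apply] using
    ContinuousMap.tendsto_iff_tendstoUniformly.1 hfg

end ExtensionByZero

/-- `D` is regular for the Dirichlet problem of the Laplace equation. -/
def IsDirichletDomain {m : ℕ} (D : Set (EuclideanSpace ℝ (Fin m))) : Prop :=
  ∀ f : EuclideanSpace ℝ (Fin m) → ℝ, ContinuousOn f (frontier D) →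
    ∃ w : EuclideanSpace ℝ (Fin m) → ℝ, ContinuousOn w (closure D) ∧
      ContDiffOn ℝ 2 w D ∧ (∀ x ∈ D, laplacian m w x = 0) ∧ Set.EqOn w f (frontier D)

/-- The graph of the Laplacian with zero boundary values: pairs `(v, F)` of continuous functions on
`closure D` with `v = 0` on the frontier and `Δv = F` in `D` in the mean-value sense. Functions on
`closure D` are extended by zero to all of `ℝ³`. -/
def poissonGraph (D : Set (EuclideanSpace ℝ (Fin 3))) :
    Submodule ℝ (C(closure D, ℝ) × C(closure D, ℝ)) where
  carrier := {p | (∀ z : closure D, z.1 ∈ frontier D → p.1 z = 0) ∧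
    IsWeakPoissonSolution D (Function.extend Subtype.val p.1 0)
      (Function.extend Subtype.val p.2 0)}
  zero_mem' := ⟨fun _ _ => rfl, by
    convert IsWeakPoissonSolution.zero <;> exact Function.extend_zero _⟩
  add_mem' := by
    rintro p q ⟨hp_frontier, hp⟩ ⟨hq_frontier, hq⟩
    refine ⟨fun z hz => ?_, ?_⟩
    · simp [hp_frontier z hz, hq_frontier z hz]
    · simpa [← Function.extend_add] using hp.add hq
  smul_mem' := by
    rintro c p ⟨hp_frontier, hp⟩
    refine ⟨fun z hz => ?_, ?_⟩
    · simp [hp_frontier z hz]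
    · simpa [← Function.extend_smul] using hp.const_smul c

section PoissonGraph

variable {D : Set (EuclideanSpace ℝ (Fin 3))}

theorem isClosed_poissonGraph [CompactSpace (closure D)] :
    IsClosed (poissonGraph D : Set (C(closure D, ℝ) × C(closure D, ℝ))) := by
  refine isClosed_of_closure_subset fun p hp => ?_
  obtain ⟨q, hq, hlim⟩ := mem_closure_iff_seq_limit.1 hp
  have hfst := (continuous_fst.tendsto p).comp hlim
  have hsnd := (continuous_snd.tendsto p).comp hlim
  refine ⟨fun z hz => ?_, IsWeakPoissonSolution.of_tendstoUniformlyOn (fun n => (hq n).2)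
    ((tendstoUniformlyOn_extend_val hfst).mono subset_closure)
    ((tendstoUniformlyOn_extend_val hsnd).mono subset_closure)⟩
  refine tendsto_nhds_unique (((continuous_eval_const z).tendsto p.1).comp hfst) ?_
  exact tendsto_const_nhds.congr fun n => ((hq n).1 z hz).symm

theorem norm_fst_le_of_mem_poissonGraph [CompactSpace (closure D)] (hD : IsOpen D) {R : ℝ}
    (hDR : D ⊆ closedBall 0 R) {l : ℝ} (hl : 0 ≤ l) {p : C(closure D, ℝ) × C(closure D, ℝ)}
    (hp : p ∈ poissonGraph D) : ‖p.1‖ ≤ R ^ 2 / 6 * ‖p.2 - l • p.1‖ := by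
  obtain ⟨hfrontier, hsol⟩ := hp
  refine (ContinuousMap.norm_le _ (by positivity)).2 fun z => ?_
  have hbound := hsol.abs_le_of_abs_source_sub_le hD hDR (continuousOn_extend_val p.1)
    (fun y hy => (Function.extend_val_apply (frontier_subset_closure hy)).trans (hfrontier _ hy)) hl
    (norm_nonneg (p.2 - l • p.1)) (fun y hy => ?_) z z.2
  · rwa [Function.extend_val_apply z.2] at hbound
  · simp only [Function.extend_val_apply (subset_closure hy)]
    exact (p.2 - l • p.1).norm_coe_le_norm ⟨y, subset_closure hy⟩

namespace IsDirichletDomain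

theorem exists_isWeakPoissonSolution_zero (hdir : IsDirichletDomain D) (hD : IsOpen D)
    {f : EuclideanSpace ℝ (Fin 3) → ℝ} (hf : ContinuousOn f (frontier D)) :
    ∃ w, ContinuousOn w (closure D) ∧ IsWeakPoissonSolution D w 0 ∧ Set.EqOn w f (frontier D) := by
  obtain ⟨w, hw_cont, hw, hlap, hwf⟩ := hdir f hf
  exact ⟨w, hw_cont, (IsWeakPoissonSolution.of_contDiffOn hD hw).congr (fun _ _ => rfl)
    fun x hx => (hlap x hx).symm, hwf⟩

theorem exists_mem_poissonGraph_of_isWeakPoissonSolution (hdir : IsDirichletDomain D)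
    (hD : IsOpen D) {p F : EuclideanSpace ℝ (Fin 3) → ℝ} (hp : ContinuousOn p (closure D))
    (h : IsWeakPoissonSolution D p F) {f : C(closure D, ℝ)} (hf : ∀ z, f z = F z.1) :
    ∃ v, (v, f) ∈ poissonGraph D := by
  obtain ⟨w, hw_cont, hw, hwp⟩ :=
    hdir.exists_isWeakPoissonSolution_zero hD (hp.mono frontier_subset_closure)
  refine ⟨⟨_, (hp.add hw_cont.neg).domRestrict⟩, fun z hz => ?_,
    (h.add hw.neg).congr (fun y hy => Function.extend_val_apply (subset_closure hy)) fun y hy => ?_⟩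
  · simp [hwp hz]
  · simp [Function.extend_val_apply (subset_closure hy), hf]

theorem exists_mem_poissonGraph_expInner (hdir : IsDirichletDomain D) (hD : IsOpen D)
    (ξ : EuclideanSpace ℝ (Fin 3)) : ∃ v, (v, expInner (closure D) ξ) ∈ poissonGraph D := by
  by_cases hξ : ξ = 0
  · refine hdir.exists_mem_poissonGraph_of_isWeakPoissonSolution hD (by fun_prop)
      ((IsWeakPoissonSolution.norm_sq_sub_const hD 0).const_smul 6⁻¹) fun z => ?_
    simp [expInner, hξ]
  · have hexp : ContDiff ℝ 2 fun z => Real.exp (inner ℝ ξ z) :=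
      Real.contDiff_exp.comp (innerSL ℝ ξ).contDiff
    refine hdir.exists_mem_poissonGraph_of_isWeakPoissonSolution hD (by fun_prop)
      ((IsWeakPoissonSolution.of_contDiffOn hD hexp.contDiffOn).const_smul (‖ξ‖ ^ 2)⁻¹) fun z => ?_
    simp [expInner, laplacian_exp_inner, hξ]

theorem dense_snd_image_poissonGraph [CompactSpace (closure D)] (hdir : IsDirichletDomain D)
    (hD : IsOpen D) :
    Dense (Prod.snd '' (poissonGraph D : Set (C(closure D, ℝ) × C(closure D, ℝ)))) := by
  have hspan : Submodule.span ℝ (Set.range (expInner (closure D))) ≤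
      (poissonGraph D).map (LinearMap.snd ℝ C(closure D, ℝ) C(closure D, ℝ)) := by
    rw [Submodule.span_le]
    rintro _ ⟨ξ, rfl⟩
    obtain ⟨v, hv⟩ := hdir.exists_mem_poissonGraph_expInner hD ξ
    exact ⟨_, hv, rfl⟩
  exact (dense_span_range_expInner (closure D)).mono hspan

theorem exists_isWeakPoissonSolution_const_smul (hdir : IsDirichletDomain D) (hD : IsOpen D)
    (hD_bdd : Bornology.IsBounded D) {l : ℝ} (hl : 0 ≤ l) {f : EuclideanSpace ℝ (Fin 3) → ℝ}
    (hf : ContinuousOn f (frontier D)) :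
    ∃ v, ContinuousOn v (closure D) ∧ IsWeakPoissonSolution D v (l • v) ∧
      Set.EqOn v f (frontier D) := by
  have : CompactSpace (closure D) := isCompact_iff_compactSpace.1 hD_bdd.isCompact_closure
  obtain ⟨w, hw_cont, hw, hwf⟩ := hdir.exists_isWeakPoissonSolution_zero hD hf
  obtain ⟨R, hDR⟩ := hD_bdd.subset_closedBall 0
  have hbound : ∀ t ∈ Set.Icc 0 l, ∀ p ∈ poissonGraph D,
      ‖p.1‖ ≤ R ^ 2 / 6 * ‖p.2 - t • p.1‖ := fun _ ht _ hp =>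
    norm_fst_le_of_mem_poissonGraph hD hDR ht.1 hp
  obtain ⟨p, ⟨hp_frontier, hp⟩, hpw⟩ := exists_mem_sub_smul_eq (G := poissonGraph D)
    isClosed_poissonGraph (hdir.dense_snd_image_poissonGraph hD) hbound ⟨hl, le_rfl⟩
    (l • ⟨_, hw_cont.domRestrict⟩)
  refine ⟨Function.extend Subtype.val p.1 0 + w, (continuousOn_extend_val p.1).add hw_cont,
    (hp.add hw).congr (fun _ _ => rfl) fun y hy => ?_, fun y hy => ?_⟩
  · have hy := subset_closure hy
    have hpwy : p.2 ⟨y, hy⟩ - l * p.1 ⟨y, hy⟩ = l * w y := DFunLike.congr_fun hpw ⟨y, hy⟩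
    simp only [Pi.smul_apply, Pi.add_apply, Function.extend_val_apply hy, smul_eq_mul,
      Pi.zero_apply]
    linarith
  · have hy_closure := frontier_subset_closure hy
    rw [Pi.add_apply, Function.extend_val_apply hy_closure, hp_frontier ⟨y, hy_closure⟩ hy,
      zero_add, hwf hy]

end IsDirichletDomain

end PoissonGraph

section SinhMeanValue

theorem one_lt_sinh_div_self {x : ℝ} (hx : x ≠ 0) : 1 < Real.sinh x / x := by
  rcases hx.lt_or_gt with hneg | hpos
  · exact (one_lt_div_of_neg hneg).2 (Real.sinh_lt_self_iff.2 hneg)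
  · exact (one_lt_div hpos).2 (Real.self_lt_sinh_iff.2 hpos)

theorem mul_eq_mul_sinh_of_hasDerivAt {G P : ℝ → ℝ} {μ R : ℝ} (hR : 0 ≤ R) (hG₀ : G 0 = 0)
    (hG : ∀ r ∈ Set.Icc 0 R, HasDerivAt G (P r) r)
    (hP : ∀ r ∈ Set.Icc 0 R, HasDerivAt P (μ ^ 2 * G r) r) :
    μ * G R = P 0 * Real.sinh (μ * R) := by
  have hcosh (r : ℝ) : HasDerivAt (fun r => Real.cosh (μ * r)) (Real.sinh (μ * r) * μ) r :=
    (by simpa using (hasDerivAt_id r).const_mul μ : HasDerivAt (μ * ·) μ r).cosh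
  have hsinh (r : ℝ) : HasDerivAt (fun r => Real.sinh (μ * r)) (Real.cosh (μ * r) * μ) r :=
    (by simpa using (hasDerivAt_id r).const_mul μ : HasDerivAt (μ * ·) μ r).sinh
  have hconst {H : ℝ → ℝ} (hH : ∀ r ∈ Set.Icc 0 R, HasDerivAt H 0 r) : H R = H 0 :=
    constant_of_has_deriv_right_zero (fun r hr => (hH r hr).continuousAt.continuousWithinAt)
      (fun r hr => (hH r ⟨hr.1, hr.2.le⟩).hasDerivWithinAt) R ⟨hR, le_rfl⟩
  have h₁ := hconst (H := fun r => P r * Real.cosh (μ * r) - μ * G r * Real.sinh (μ * r))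
    fun r hr => (((hP r hr).mul (hcosh r)).sub
      (((hG r hr).const_mul μ).mul (hsinh r))).congr_deriv (by ring)
  have h₂ := hconst (H := fun r => μ * G r * Real.cosh (μ * r) - P r * Real.sinh (μ * r))
    fun r hr => ((((hG r hr).const_mul μ).mul (hcosh r)).sub
      ((hP r hr).mul (hsinh r))).congr_deriv (by ring)
  simp only [hG₀, mul_zero, Real.cosh_zero, Real.sinh_zero, sub_zero, mul_one] at h₁ h₂
  linear_combination Real.sinh (μ * R) * h₁ + Real.cosh (μ * R) * h₂ -
    μ * G R * Real.cosh_sq_sub_sinh_sq (μ * R)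

theorem hasDerivAt_integral_sub_mul {g : ℝ → ℝ} (hg : Continuous g) (r : ℝ) :
    HasDerivAt (fun r => ∫ s in (0 : ℝ)..r, (r - s) * g s) (∫ s in (0 : ℝ)..r, g s) r := by
  have hsg : Continuous fun s => s * g s := by fun_prop
  have hsplit : (fun r => ∫ s in (0 : ℝ)..r, (r - s) * g s) =
      fun r => r * (∫ s in (0 : ℝ)..r, g s) - ∫ s in (0 : ℝ)..r, s * g s := funext fun r => by
    simp only [sub_mul]
    rw [intervalIntegral.integral_sub ((hg.const_mul r).intervalIntegrable 0 r)
      (hsg.intervalIntegrable 0 r), intervalIntegral.integral_const_mul]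
  rw [hsplit]
  refine (((hasDerivAt_id r).mul (hg.integral_hasStrictDerivAt 0 r).hasDerivAt).sub
    (hsg.integral_hasStrictDerivAt 0 r).hasDerivAt).congr_deriv ?_
  simp

theorem mul_eq_mul_sinh_of_volterra {g : ℝ → ℝ} (hg : Continuous g) {a μ R : ℝ} (hR : 0 ≤ R)
    (h : ∀ r ∈ Set.Icc 0 R, g r = r * a + μ ^ 2 * ∫ s in (0 : ℝ)..r, (r - s) * g s) :
    μ * g R = a * Real.sinh (μ * R) := by
  have hsinh := mul_eq_mul_sinh_of_hasDerivAt
    (G := fun r => r * a + μ ^ 2 * ∫ s in (0 : ℝ)..r, (r - s) * g s)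
    (P := fun r => a + μ ^ 2 * ∫ s in (0 : ℝ)..r, g s) (μ := μ) hR (by simp)
    (fun r _ => (((hasDerivAt_id r).mul_const a).add
      ((hasDerivAt_integral_sub_mul hg r).const_mul (μ ^ 2))).congr_deriv (by simp))
    (fun r hr => by
      rw [← h r hr]
      exact ((hg.integral_hasStrictDerivAt 0 r).hasDerivAt.const_mul (μ ^ 2)).const_add a)
  rw [← h R ⟨hR, le_rfl⟩] at hsinh
  simpa using hsinh

theorem IsWeakPoissonSolution.sphereMean_eq_sinh_div_mul {D : Set (EuclideanSpace ℝ (Fin 3))}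
    {v : EuclideanSpace ℝ (Fin 3) → ℝ} {μ : ℝ} (h : IsWeakPoissonSolution D v (μ ^ 2 • v))
    (hμ : μ ≠ 0) (hD : IsOpen D) {x : EuclideanSpace ℝ (Fin 3)} {R : ℝ} (hR : 0 < R)
    (hball : closedBall x R ⊆ D) :
    sphereMean 3 v x R = Real.sinh (μ * R) / (μ * R) * v x := by
  obtain ⟨w, hw, hwv⟩ := exists_contDiff_eventuallyEq_nhdsSet (n := 0) isClosed_closedBall hD
    hball (contDiffOn_zero.2 h.continuousOn)
  have heq : Set.EqOn v w (closedBall x R) := hwv.self_of_nhdsSet.symm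
  have hmean : ∀ r ∈ Set.Icc 0 R, r * sphereMean 3 w x r =
      r * v x + μ ^ 2 * ∫ s in (0 : ℝ)..r, (r - s) * (s * sphereMean 3 w x s) := by
    intro r hr
    rcases hr.1.eq_or_lt with rfl | hr_pos
    · simp
    have hball_r := closedBall_subset_closedBall (x := x) hr.2
    have hsubst := intervalIntegral.mul_integral_comp_mul_left (a := 0) (b := 1)
      (f := fun s => (r - s) * (s * sphereMean 3 w x s)) (c := r)
    rw [mul_zero, mul_one] at hsubst
    have hscale : (∫ t in (0 : ℝ)..1, (r - r * t) * (r * t * sphereMean 3 w x (r * t))) =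
        r ^ 2 * ∫ t in (0 : ℝ)..1, t * (1 - t) * sphereMean 3 w x (r * t) := by
      rw [← intervalIntegral.integral_const_mul]
      congr with t
      ring
    rw [← sphereMean_congr hr.1 (heq.mono hball_r),
      h.sphereMean_eq x r hr_pos (hball_r.trans hball)]
    simp only [Pi.smul_apply, smul_eq_mul, integral_const_mul]
    rw [integral_comp_add_smul_congr ae_mem_closedBall_ballGreenMeasure hr.1 (heq.mono hball_r),
      integral_ballGreenMeasure_comp_add_smul hw.continuous, ← hsubst, hscale]
    ring
  have hsinh := mul_eq_mul_sinh_of_volterra (g := fun r => r * sphereMean 3 w x r)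
    (continuous_id.mul (continuous_sphereMean hw.continuous)) hR.le hmean
  rw [sphereMean_congr hR.le heq]
  field_simp
  linear_combination hsinh

end SinhMeanValue

section MeanValueComparison

variable {m : ℕ} [NeZero m] {D : Set (EuclideanSpace ℝ (Fin m))}
  {u v : EuclideanSpace ℝ (Fin m) → ℝ}

theorem le_on_closure_of_sphereMean_eq_mul (hD_bdd : Bornology.IsBounded D)
    (hu : ContinuousOn u (closure D)) (hv : ContinuousOn v (closure D))
    (hfrontier : Set.EqOn u v (frontier D))
    (hmean : ∀ x ∈ D, ∃ r > 0, closedBall x r ⊆ D ∧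
      ∃ c > 1, sphereMean m u x r = c * u x ∧ sphereMean m v x r = c * v x) :
    ∀ z ∈ closure D, u z ≤ v z := by
  intro z hz
  refine sub_nonpos.1 (nonpos_on_closure_of_forall_not_isMaxOn (e := fun z => u z - v z)
    hD_bdd.isCompact_closure (hu.sub hv) (fun y hy => (sub_eq_zero.2 (hfrontier hy)).le)
    (fun x hx hpos hmax => ?_) z hz)
  obtain ⟨r, hr, hball, c, hc, hux, hvx⟩ := hmean x hx
  have hball_closure := hball.trans subset_closure
  have hle := sphereMean_le_of_forall_mem_closedBall_le hr.le
    ((hu.sub hv).mono hball_closure) fun y hy => hmax (hball hy)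
  have hsub := sphereMean_sub hr.le (hu.mono hball_closure) (hv.mono hball_closure)
  rw [hsub, hux, hvx, ← mul_sub] at hle
  exact (lt_mul_of_one_lt_left hpos hc).not_ge hle

theorem eqOn_closure_of_sphereMean_eq_mul (hD_bdd : Bornology.IsBounded D)
    (hu : ContinuousOn u (closure D)) (hv : ContinuousOn v (closure D))
    (hfrontier : Set.EqOn u v (frontier D))
    (hmean : ∀ x ∈ D, ∃ r > 0, closedBall x r ⊆ D ∧
      ∃ c > 1, sphereMean m u x r = c * u x ∧ sphereMean m v x r = c * v x) :
    Set.EqOn u v (closure D) := fun z hz =>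
  le_antisymm (le_on_closure_of_sphereMean_eq_mul hD_bdd hu hv hfrontier hmean z hz)
    (le_on_closure_of_sphereMean_eq_mul hD_bdd hv hu hfrontier.symm
      (fun x hx => by simpa only [and_comm (a := sphereMean m u x _ = _)] using hmean x hx) z hz)

end MeanValueComparison

theorem IsDirichletDomain.isWeakPoissonSolution_of_exists_sphereMean_eq
    {D : Set (EuclideanSpace ℝ (Fin 3))} (hDirichlet : IsDirichletDomain D) (hD_open : IsOpen D)
    (hD_bdd : Bornology.IsBounded D) {u : EuclideanSpace ℝ (Fin 3) → ℝ}
    (hu_cont : ContinuousOn u (closure D)) {μ : ℝ} (hμ : μ ≠ 0)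
    (hmean : ∀ x ∈ D, ∃ r > (0 : ℝ), closedBall x r ⊆ D ∧
      sphereMean 3 u x r = (Real.sinh (μ * r) / (μ * r)) * u x) :
    IsWeakPoissonSolution D u (μ ^ 2 • u) := by
  obtain ⟨v, hv_cont, hv, hv_frontier⟩ :=
    hDirichlet.exists_isWeakPoissonSolution_const_smul hD_open hD_bdd (sq_nonneg μ)
      (hu_cont.mono frontier_subset_closure)
  have huv : Set.EqOn u v (closure D) := by
    refine eqOn_closure_of_sphereMean_eq_mul hD_bdd hu_cont hv_cont hv_frontier.symm
      fun x hx => ?_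
    obtain ⟨r, hr, hball, hux⟩ := hmean x hx
    exact ⟨r, hr, hball, _, one_lt_sinh_div_self (mul_ne_zero hμ hr.ne'), hux,
      hv.sphereMean_eq_sinh_div_mul hμ hD_open hr hball⟩
  have huv_D := huv.mono subset_closure
  exact hv.congr huv_D fun _ hx => congrArg (μ ^ 2 * ·) (huv_D hx)

theorem stmt_13_general {D : Set (EuclideanSpace ℝ (Fin 3))} (hD_open : IsOpen D)
    (hD_bdd : Bornology.IsBounded D) (hDirichlet : IsDirichletDomain D)
    {u : EuclideanSpace ℝ (Fin 3) → ℝ} (hu_cont : ContinuousOn u (closure D))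
    (hu_C2 : ContDiffOn ℝ 2 u D) {μ : ℝ} (hμ : μ ≠ 0)
    (hmean : ∀ x ∈ D, ∃ r > (0 : ℝ), closedBall x r ⊆ D ∧
      sphereMean 3 u x r = (Real.sinh (μ * r) / (μ * r)) * u x) :
    ∀ x ∈ D, laplacian 3 u x - μ ^ 2 * u x = 0 := fun _ hx =>
  sub_eq_zero.2 <| (IsWeakPoissonSolution.of_contDiffOn hD_open hu_C2).source_unique
    (hDirichlet.isWeakPoissonSolution_of_exists_sphereMean_eq hD_open hD_bdd hu_cont hμ hmean)
    hD_open hx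

/-- Converse of Neumann's theorem in a Dirichlet domain `D ⊆ ℝ³`: if at every
`x ∈ D` the mean value equality `M(x, r(x), u) = (sinh(μ r(x))/(μ r(x))) u(x)`
holds for some admissible sphere, then `u` is panharmonic with coefficient `μ²`. -/
theorem stmt_13 (D : Set (EuclideanSpace ℝ (Fin 3)))
    (hD_open : IsOpen D) (hD_conn : IsConnected D)
    (hD_bdd : Bornology.IsBounded D)
    (hDirichlet : ∀ f : EuclideanSpace ℝ (Fin 3) → ℝ, ContinuousOn f (frontier D) →
      ∃ w : EuclideanSpace ℝ (Fin 3) → ℝ, ContinuousOn w (closure D) ∧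
        ContDiffOn ℝ 2 w D ∧ (∀ x ∈ D, laplacian 3 w x = 0) ∧
        Set.EqOn w f (frontier D))
    (u : EuclideanSpace ℝ (Fin 3) → ℝ)
    (hu_cont : ContinuousOn u (closure D))
    (hu_C2 : ContDiffOn ℝ 2 u D)
    (μ : ℝ) (hμ : 0 < μ)
    (hmean : ∀ x ∈ D, ∃ r > (0 : ℝ), closedBall x r ⊆ D ∧
      sphereMean 3 u x r = (Real.sinh (μ * r) / (μ * r)) * u x) :
    ∀ x ∈ D, laplacian 3 u x - μ ^ 2 * u x = 0 :=
  stmt_13_general hD_open hD_bdd hDirichlet hu_cont hu_C2 hμ.ne' hmean
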